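/- arXiv:1412.7905 — 2 statements merged into one kernel-verified Lean document; each statement's English description precedes it below -/
import Mathlib

section
/- Let 0 = i_0 < i_1 < ⋯ < i_l = d and 0 = j_0 < j_1 < ⋯ < j_m = d be the block indices such that a_1 = ⋯ = a_{i_1} > a_{i_1+1} = ⋯ = a_{i_2} > ⋯ > a_{i_{l-1}+1} = ⋯ = a_{i_l} and b_1 = ⋯ = b_{j_1} > b_{j_1+1} = ⋯ = b_{j_2} > ⋯ > b_{j_{m-1}+1} = ⋯ = b_{j_m}, and let λ_i := lim_{p→∞} λ_i(p) be the limiting eigenvalues of Z_p := (A^{p/2} B^p A^{p/2})^{1/p}. Then the following are equivalent: (i) λ_i = a_i b_i for all i = 1,…,d; (ii) for every k = 1,…,d, taking r and s with i_{r-1} < k ≤ i_r and j_{s-1} < k ≤ j_s, there exist subsets I_k, J_k ⊆ {1,…,d} of cardinality k with {1,…,i_{r-1}} ⊆ I_k ⊆ {1,…,i_r}, {1,…,j_{s-1}} ⊆ J_k ⊆ {1,…,j_s}, and det (V*W)_{I_k,J_k} ≠ 0; (iii) the property in (ii) holds for every k in {i_1,…,i_{l-1}, j_1,…,j_{m-1}}.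 -/
open Matrix Filter Topology Finset
open scoped ComplexOrder

/-- Functional-calculus power of a (Hermitian, in practice positive semidefinite)
matrix, with the convention `0 ^ r = 0` for `r > 0`. -/
noncomputable def psdPow {d : ℕ} (A : Matrix (Fin d) (Fin d) ℂ) (r : ℝ) :
    Matrix (Fin d) (Fin d) ℂ :=
  if hA : A.IsHermitian then
    (hA.eigenvectorUnitary : Matrix (Fin d) (Fin d) ℂ) *
      Matrix.diagonal (fun i => ((hA.eigenvalues i ^ r : ℝ) : ℂ)) *
      star (hA.eigenvectorUnitary : Matrix (Fin d) (Fin d) ℂ)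
  else 0

/-- The eigenvalues of a Hermitian matrix, sorted in decreasing order
(with multiplicities). -/
noncomputable def eigsDesc {d : ℕ} (A : Matrix (Fin d) (Fin d) ℂ) : Fin d → ℝ :=
  if hA : A.IsHermitian then
    fun i => hA.eigenvalues (Tuple.sort hA.eigenvalues i.rev)
  else 0

/-- `Zmat A B p = (A^{p/2} B^p A^{p/2})^{1/p}`. -/
noncomputable def Zmat {d : ℕ} (A B : Matrix (Fin d) (Fin d) ℂ) (p : ℝ) :
    Matrix (Fin d) (Fin d) ℂ :=
  psdPow (psdPow A (p / 2) * psdPow B p * psdPow A (p / 2)) (1 / p)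

/-- Condition (ii) of Theorem 3.1 for the (1-based) index `k+1`: there exist index sets
`I, J` of cardinality `k+1` with
`{i : a_i > a_{k+1}} ⊆ I ⊆ {i : a_i ≥ a_{k+1}}` (these are the sets `{1,…,i_{r-1}}` and
`{1,…,i_r}` determined by the block structure of the decreasing tuple `a`), similarly for
`J` and `b`, such that `det U_{I,J} ≠ 0`. -/
def BlockMinorCond {d : ℕ} (U : Matrix (Fin d) (Fin d) ℂ) (a b : Fin d → ℝ)
    (k : Fin d) : Prop :=
  ∃ (I J : Finset (Fin d)) (hI : I.card = (k : ℕ) + 1) (hJ : J.card = (k : ℕ) + 1),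
    Finset.univ.filter (fun i => a k < a i) ⊆ I ∧
    I ⊆ Finset.univ.filter (fun i => a k ≤ a i) ∧
    Finset.univ.filter (fun i => b k < b i) ⊆ J ∧
    J ⊆ Finset.univ.filter (fun i => b k ≤ b i) ∧
    (U.submatrix (fun r : Fin ((k : ℕ) + 1) => ((I.orderIsoOfFin hI r : Fin d)))
      (fun c : Fin ((k : ℕ) + 1) => ((J.orderIsoOfFin hJ c : Fin d)))).det ≠ 0


theorem psdPow_eq {d : ℕ} (A V : Matrix (Fin d) (Fin d) ℂ) (a : Fin d → ℝ)
    (hV : V ∈ Matrix.unitaryGroup (Fin d) ℂ)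
    (hAd : A = V * Matrix.diagonal (fun i => (a i : ℂ)) * Vᴴ) (r : ℝ) :
    psdPow A r = V * Matrix.diagonal (fun i => ((a i ^ r : ℝ) : ℂ)) * Vᴴ := by
  have hV1 : Vᴴ * V = 1 := Matrix.mem_unitaryGroup_iff'.1 hV
  have hV2 : V * Vᴴ = 1 := Matrix.mem_unitaryGroup_iff.1 hV
  have hA : A.IsHermitian := by
    rw [hAd, Matrix.IsHermitian]
    simp only [Matrix.conjTranspose_mul, Matrix.conjTranspose_conjTranspose,
      Matrix.diagonal_conjTranspose, Matrix.mul_assoc]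
    congr 3
    ext i
    simp
  have hs := hA.spectral_theorem
  rw [Unitary.conjStarAlgAut_apply] at hs
  rw [psdPow, dif_pos hA]
  set Q := (hA.eigenvectorUnitary : Matrix (Fin d) (Fin d) ℂ) with hQ
  have hQ1 : star Q * Q = 1 := Unitary.coe_star_mul_self hA.eigenvectorUnitary
  have hQ2 : Q * star Q = 1 := Unitary.coe_mul_star_self hA.eigenvectorUnitary
  have key : (star Q * V) * Matrix.diagonal (fun i => (a i : ℂ))
      = Matrix.diagonal (fun i => (hA.eigenvalues i : ℂ)) * (star Q * V) := by
    have h1 : star Q * A * V = (star Q * V) * Matrix.diagonal (fun i => (a i : ℂ)) := by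
      conv_lhs => rw [hAd]
      simp only [Matrix.mul_assoc, hV1, Matrix.mul_one]
    have h2 : star Q * A * V = Matrix.diagonal (fun i => (hA.eigenvalues i : ℂ)) * (star Q * V) := by
      conv_lhs => rw [hs]
      simp only [← Matrix.mul_assoc, hQ1, Matrix.one_mul]
      rfl
    rw [← h1, h2]
  have key2 : (star Q * V) * Matrix.diagonal (fun i => ((a i ^ r : ℝ) : ℂ))
      = Matrix.diagonal (fun i => ((hA.eigenvalues i ^ r : ℝ) : ℂ)) * (star Q * V) := by
    ext i j
    have := congrFun (congrFun key i) j
    rw [Matrix.mul_diagonal, Matrix.diagonal_mul] at this ⊢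
    by_cases h0 : (star Q * V) i j = 0
    · simp [h0]
    · rw [mul_comm] at this
      have h3 := mul_right_cancel₀ h0 this
      have h4 : a j = hA.eigenvalues i := by exact_mod_cast h3
      rw [h4, mul_comm]
  calc Q * Matrix.diagonal (fun i => ((hA.eigenvalues i ^ r : ℝ) : ℂ)) * star Q
      = Q * (Matrix.diagonal (fun i => ((hA.eigenvalues i ^ r : ℝ) : ℂ)) * (star Q * V)) * Vᴴ := by
        simp only [Matrix.mul_assoc, hV2, Matrix.mul_one]
    _ = (Q * star Q) * V * Matrix.diagonal (fun i => ((a i ^ r : ℝ) : ℂ)) * Vᴴ := by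
        rw [← key2]; simp only [Matrix.mul_assoc]
    _ = _ := by rw [hQ2, Matrix.one_mul]

theorem eigsDesc_antitone {d : ℕ} (A : Matrix (Fin d) (Fin d) ℂ) : Antitone (eigsDesc A) := by
  unfold eigsDesc
  split_ifs with h
  · intro i j hij
    exact Tuple.monotone_sort h.eigenvalues (Fin.rev_le_rev.2 hij)
  · exact antitone_const

theorem det_one_add_conj {d : ℕ} (V M : Matrix (Fin d) (Fin d) ℂ)
    (hV : V ∈ Matrix.unitaryGroup (Fin d) ℂ) :
    (1 + (Polynomial.X : Polynomial ℂ) • (V * M * Vᴴ).map Polynomial.C).det =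
    (1 + (Polynomial.X : Polynomial ℂ) • M.map Polynomial.C).det := by
  have hV1 : Vᴴ * V = 1 := Matrix.mem_unitaryGroup_iff'.1 hV
  have h1 : (Vᴴ).map Polynomial.C * V.map Polynomial.C = 1 := by
    rw [← Matrix.map_mul, hV1]; simp
  rw [Matrix.mul_assoc, Matrix.map_mul, Matrix.map_mul, ← Matrix.mul_smul,
    Matrix.det_one_add_mul_comm, Matrix.smul_mul, Matrix.mul_assoc, h1, Matrix.mul_one]

theorem coeff_diag {d : ℕ} (x : Fin d → ℂ) (k : ℕ) :
    (1 + (Polynomial.X : Polynomial ℂ) • (Matrix.diagonal x).map Polynomial.C).det.coeff k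
    = ∑ S ∈ (Finset.univ : Finset (Fin d)).powersetCard k, ∏ i ∈ S, x i := by
  rw [Matrix.coeff_det_one_add_X_smul_eq_sum_minors]
  refine Finset.sum_congr rfl fun s _ => ?_
  rw [Matrix.submatrix_diagonal _ _ Subtype.val_injective, Matrix.det_diagonal]
  exact Finset.prod_coe_sort s x

theorem exists_perm_of_map_eq {d : ℕ} (f g : Fin d → ℝ)
    (h : Finset.univ.val.map f = Finset.univ.val.map g) :
    ∃ τ : Equiv.Perm (Fin d), f = g ∘ τ := by
  have h1 : (List.ofFn f).Perm (List.ofFn g) := by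
    rw [Fin.univ_val_map, Fin.univ_val_map] at h
    exact Multiset.coe_eq_coe.1 h
  have hf := Tuple.monotone_sort f
  have hg := Tuple.monotone_sort g
  have h2 : List.ofFn (f ∘ Tuple.sort f) = List.ofFn (g ∘ Tuple.sort g) := by
    apply List.Perm.eq_of_sortedLE hf.sortedLE_ofFn hg.sortedLE_ofFn
    exact ((Equiv.Perm.ofFn_comp_perm _ f).trans h1).trans (Equiv.Perm.ofFn_comp_perm _ g).symm
  have h3 := List.ofFn_injective h2
  refine ⟨(Tuple.sort f).symm.trans (Tuple.sort g), ?_⟩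
  ext i
  have := congrFun h3 ((Tuple.sort f).symm i)
  simpa using this

theorem eigsDesc_perm {d : ℕ} (A V : Matrix (Fin d) (Fin d) ℂ) (x : Fin d → ℝ)
    (hV : V ∈ Matrix.unitaryGroup (Fin d) ℂ)
    (hAd : A = V * Matrix.diagonal (fun i => (x i : ℂ)) * Vᴴ) :
    ∃ σ : Equiv.Perm (Fin d), ∀ i, eigsDesc A i = x (σ i) := by
  have hV1 : Vᴴ * V = 1 := Matrix.mem_unitaryGroup_iff'.1 hV
  have hA : A.IsHermitian := by
    rw [hAd, Matrix.IsHermitian]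
    simp only [Matrix.conjTranspose_mul, Matrix.conjTranspose_conjTranspose,
      Matrix.diagonal_conjTranspose, Matrix.mul_assoc]
    congr 3
    ext i
    simp
  have h1 := hA.roots_charpoly_eq_eigenvalues
  have h2 : A.charpoly = ((Finset.univ.val.map (fun i => (x i : ℂ))).map
      (fun t => Polynomial.X - Polynomial.C t)).prod := by
    rw [hAd, Matrix.charpoly_mul_comm, ← Matrix.mul_assoc, hV1, Matrix.one_mul,
      Matrix.charpoly_diagonal]
    rw [Multiset.map_map]; rfl
  rw [h2, Polynomial.roots_multiset_prod_X_sub_C] at h1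
  have h3 : Finset.univ.val.map x = Finset.univ.val.map hA.eigenvalues := by
    have := congrArg (Multiset.map Complex.re) h1
    simpa [Multiset.map_map, Function.comp_def] using this
  obtain ⟨τ, hτ⟩ := exists_perm_of_map_eq _ _ h3.symm
  refine ⟨(Fin.revPerm.trans (Tuple.sort hA.eigenvalues)).trans τ, fun i => ?_⟩
  rw [eigsDesc, dif_pos hA]
  have := congrFun hτ (Tuple.sort hA.eigenvalues i.rev)
  simpa using this

/-- Gram determinant of a (possibly rectangular) submatrix. -/
noncomputable def gramDet {d : ℕ} (U : Matrix (Fin d) (Fin d) ℂ) (I J : Finset (Fin d)) : ℂ :=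
  ((U.submatrix (Subtype.val : I → Fin d) (Subtype.val : J → Fin d))ᴴ *
    (U.submatrix (Subtype.val : I → Fin d) (Subtype.val : J → Fin d))).det

theorem gram_eq {d n : ℕ} (U : Matrix (Fin d) (Fin d) ℂ) (I J : Finset (Fin d))
    (hI : I.card = n) (hJ : J.card = n) :
    gramDet U I J = ((‖(U.submatrix (fun r : Fin n => ((I.orderIsoOfFin hI r : Fin d)))
      (fun c : Fin n => ((J.orderIsoOfFin hJ c : Fin d)))).det‖ ^ 2 : ℝ) : ℂ) := by
  set X := U.submatrix (Subtype.val : I → Fin d) (Subtype.val : J → Fin d) with hX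
  have h1 : U.submatrix (fun r : Fin n => ((I.orderIsoOfFin hI r : Fin d)))
      (fun c : Fin n => ((J.orderIsoOfFin hJ c : Fin d))) =
      X.submatrix (I.orderIsoOfFin hI).toEquiv (J.orderIsoOfFin hJ).toEquiv := rfl
  have h2 : (Xᴴ * X).submatrix (J.orderIsoOfFin hJ).toEquiv (J.orderIsoOfFin hJ).toEquiv
      = (X.submatrix (I.orderIsoOfFin hI).toEquiv (J.orderIsoOfFin hJ).toEquiv)ᴴ *
        X.submatrix (I.orderIsoOfFin hI).toEquiv (J.orderIsoOfFin hJ).toEquiv := by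
    rw [Matrix.conjTranspose_submatrix X, Matrix.submatrix_mul_equiv]
  rw [gramDet, ← hX, h1, ← Matrix.det_submatrix_equiv_self (J.orderIsoOfFin hJ).toEquiv, h2,
    Matrix.det_mul, Matrix.det_conjTranspose]
  rw [Complex.ofReal_pow, ← Complex.conj_mul']
  rfl

theorem cauchyBinet_aux {m n : Type*} [Fintype m] [DecidableEq m] [Fintype n] [DecidableEq n]
    (N : Matrix m n ℂ) (N' : Matrix n m ℂ) :
    (N * N').det = ∑ J ∈ (Finset.univ : Finset n).powersetCard (Fintype.card m),
      (N'.submatrix (Subtype.val : J → n) id * N.submatrix id (Subtype.val : J → n)).det := by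
  have h1 := Matrix.coeff_det_one_add_X_smul_eq_sum_minors (N * N') (Fintype.card m)
  have h2 := Matrix.coeff_det_one_add_X_smul_eq_sum_minors (N' * N) (Fintype.card m)
  have h3 : (1 + (Polynomial.X : Polynomial ℂ) • (N * N').map Polynomial.C).det =
      (1 + (Polynomial.X : Polynomial ℂ) • (N' * N).map Polynomial.C).det := by
    rw [Matrix.map_mul, Matrix.map_mul, ← Matrix.mul_smul, Matrix.det_one_add_mul_comm,
      Matrix.smul_mul]
  rw [h3, h2] at h1
  have h4 : (Finset.univ : Finset m).powersetCard (Fintype.card m) = {Finset.univ} := by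
    rw [← Finset.card_univ, Finset.powersetCard_self]
  rw [h4, Finset.sum_singleton] at h1
  have h5 : ((N * N').submatrix (Subtype.val : ↥(Finset.univ : Finset m) → m) Subtype.val).det
      = (N * N').det := by
    let e : ↥(Finset.univ : Finset m) ≃ m :=
      ⟨Subtype.val, fun x => ⟨x, Finset.mem_univ x⟩, fun _ => rfl, fun _ => rfl⟩
    have := Matrix.det_submatrix_equiv_self e (N * N')
    rw [← this]
    rfl
  rw [← h5, ← h1]
  refine Finset.sum_congr rfl fun J _ => ?_
  rfl

theorem minors_sum {d : ℕ} (U : Matrix (Fin d) (Fin d) ℂ) (x y : Fin d → ℂ) (k : ℕ) :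
    (1 + (Polynomial.X : Polynomial ℂ) • (Matrix.diagonal x * (U * (Matrix.diagonal y * Uᴴ))).map
      Polynomial.C).det.coeff k =
    ∑ I ∈ (Finset.univ : Finset (Fin d)).powersetCard k,
      ∑ J ∈ (Finset.univ : Finset (Fin d)).powersetCard k,
        (∏ i ∈ I, x i) * (∏ j ∈ J, y j) * gramDet U I J := by
  rw [Matrix.coeff_det_one_add_X_smul_eq_sum_minors]
  refine Finset.sum_congr rfl fun I hI => ?_
  have hIc : Fintype.card I = k := by simpa using hI
  have h1 : (Matrix.diagonal x * (U * (Matrix.diagonal y * Uᴴ))).submatrix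
      (Subtype.val : I → Fin d) (Subtype.val : I → Fin d) =
      Matrix.diagonal (fun i : I => x i) * (U.submatrix (Subtype.val : I → Fin d) id *
        (Matrix.diagonal y * Uᴴ).submatrix id (Subtype.val : I → Fin d)) := by
    ext i j
    rw [Matrix.submatrix_apply, Matrix.diagonal_mul, Matrix.diagonal_mul]
    rfl
  rw [h1, Matrix.det_mul, Matrix.det_diagonal, cauchyBinet_aux, hIc, Finset.mul_sum]
  refine Finset.sum_congr rfl fun J hJ => ?_
  have h2 : ((Matrix.diagonal y * Uᴴ).submatrix id (Subtype.val : I → Fin d)).submatrix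
      (Subtype.val : J → Fin d) id = Matrix.diagonal (fun j : J => y j) *
      (U.submatrix (Subtype.val : I → Fin d) (Subtype.val : J → Fin d))ᴴ := by
    ext i j
    simp [Matrix.diagonal_mul]
  rw [h2, Matrix.mul_assoc, Matrix.det_mul, Matrix.det_diagonal, Finset.prod_coe_sort I x,
    Finset.prod_coe_sort J y, mul_assoc]
  rfl

theorem det_one_add_cyc {d : ℕ} (D N : Matrix (Fin d) (Fin d) ℂ) :
    (1 + (Polynomial.X : Polynomial ℂ) • (D * N * D).map Polynomial.C).det =
    (1 + (Polynomial.X : Polynomial ℂ) • (D * D * N).map Polynomial.C).det := by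
  rw [Matrix.map_mul, ← Matrix.smul_mul, Matrix.det_one_add_mul_comm, Matrix.mul_smul,
      ← Matrix.map_mul, ← Matrix.mul_assoc D D]

set_option maxHeartbeats 1000000 in
/-- The key identity for the elementary symmetric functions of the eigenvalues of `Z_p`. -/
theorem zmat_esymm {d : ℕ} (A B V W : Matrix (Fin d) (Fin d) ℂ) (a b : Fin d → ℝ)
    (hV : V ∈ Matrix.unitaryGroup (Fin d) ℂ)
    (hW : W ∈ Matrix.unitaryGroup (Fin d) ℂ)
    (ha0 : ∀ i, 0 ≤ a i) (hb0 : ∀ i, 0 ≤ b i)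
    (hAd : A = V * Matrix.diagonal (fun i => (a i : ℂ)) * Vᴴ)
    (hBd : B = W * Matrix.diagonal (fun i => (b i : ℂ)) * Wᴴ)
    (p : ℝ) (hp : 0 < p) :
    (∀ i, 0 ≤ eigsDesc (Zmat A B p) i) ∧
    ∀ k, ((∑ S ∈ (Finset.univ : Finset (Fin d)).powersetCard k,
        (∏ i ∈ S, eigsDesc (Zmat A B p) i) ^ p : ℝ) : ℂ) =
      ∑ I ∈ (Finset.univ : Finset (Fin d)).powersetCard k,
      ∑ J ∈ (Finset.univ : Finset (Fin d)).powersetCard k,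
        ((((∏ i ∈ I, a i) * (∏ j ∈ J, b j)) ^ p : ℝ) : ℂ) * gramDet (Vᴴ * W) I J := by
  have hV1 : Vᴴ * V = 1 := Matrix.mem_unitaryGroup_iff'.1 hV
  set U := Vᴴ * W with hU
  have hUh : Uᴴ = Wᴴ * V := by rw [hU, Matrix.conjTranspose_mul, Matrix.conjTranspose_conjTranspose]
  set M := psdPow A (p / 2) * psdPow B p * psdPow A (p / 2) with hM
  let Dh : Matrix (Fin d) (Fin d) ℂ := Matrix.diagonal (fun i => ((a i ^ (p/2) : ℝ) : ℂ))
  let E : Matrix (Fin d) (Fin d) ℂ := Matrix.diagonal (fun i => ((b i ^ p : ℝ) : ℂ))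
  have hDh : Dhᴴ = Dh := by
    simp only [Dh, Matrix.diagonal_conjTranspose]; congr 1; ext i; simp
  have hDD : Dh * Dh = Matrix.diagonal (fun i => ((a i ^ p : ℝ) : ℂ)) := by
    simp only [Dh, Matrix.diagonal_mul_diagonal]
    congr 1; ext i
    rw [← Complex.ofReal_mul, ← Real.rpow_add_of_nonneg (ha0 i) (by positivity) (by positivity)]
    congr 2; ring
  have hMf : M = V * (Dh * (U * (E * Uᴴ)) * Dh) * Vᴴ := by
    rw [hM, psdPow_eq A V a hV hAd, psdPow_eq B W b hW hBd, hUh, hU]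
    simp only [Matrix.mul_assoc, Dh, E]
  have hEpsd : E.PosSemidef := by
    refine Matrix.PosSemidef.diagonal fun i => ?_
    have := Real.rpow_nonneg (hb0 i) p
    simpa using this
  have hMpsd : M.PosSemidef := by
    have := hEpsd.mul_mul_conjTranspose_same (V * (Dh * U))
    rw [hMf]
    convert this using 1
    simp only [Matrix.conjTranspose_mul, hDh, Matrix.mul_assoc]
  have hMh := hMpsd.isHermitian
  set Q := (hMh.eigenvectorUnitary : Matrix (Fin d) (Fin d) ℂ) with hQ
  have hQu : Q ∈ Matrix.unitaryGroup (Fin d) ℂ := hMh.eigenvectorUnitary.2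
  set μ := hMh.eigenvalues with hμ
  have hμ0 : ∀ i, 0 ≤ μ i := fun i => hMpsd.eigenvalues_nonneg i
  have hs : M = Q * Matrix.diagonal (fun i => (μ i : ℂ)) * Qᴴ := by
    have := hMh.spectral_theorem
    rw [Unitary.conjStarAlgAut_apply] at this
    exact this
  have hZ : Zmat A B p = Q * Matrix.diagonal (fun i => ((μ i ^ (1/p) : ℝ) : ℂ)) * Qᴴ :=
    psdPow_eq M Q μ hQu hs (1/p)
  obtain ⟨σ, hσ⟩ := eigsDesc_perm _ Q _ hQu hZ
  have hz0 : ∀ i, 0 ≤ eigsDesc (Zmat A B p) i := fun i => by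
    rw [hσ]; exact Real.rpow_nonneg (hμ0 _) _
  refine ⟨hz0, fun k => ?_⟩
  have e1 : ∀ i, eigsDesc (Zmat A B p) i ^ p = μ (σ i) := fun i => by
    rw [hσ, ← Real.rpow_mul (hμ0 _), one_div, inv_mul_cancel₀ hp.ne', Real.rpow_one]
  have c1 : (1 + (Polynomial.X : Polynomial ℂ) • M.map Polynomial.C).det.coeff k =
      ∑ S ∈ (Finset.univ : Finset (Fin d)).powersetCard k, ∏ i ∈ S, (μ i : ℂ) := by
    rw [hs, det_one_add_conj _ _ hQu, coeff_diag]
  have c2 : (1 + (Polynomial.X : Polynomial ℂ) • M.map Polynomial.C).det.coeff k =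
      ∑ I ∈ (Finset.univ : Finset (Fin d)).powersetCard k,
      ∑ J ∈ (Finset.univ : Finset (Fin d)).powersetCard k,
        (∏ i ∈ I, ((a i ^ p : ℝ) : ℂ)) * (∏ j ∈ J, ((b j ^ p : ℝ) : ℂ)) * gramDet U I J := by
    rw [hMf, det_one_add_conj _ _ hV, ← minors_sum, ← hDD, det_one_add_cyc]
  have c3 : ∑ S ∈ (Finset.univ : Finset (Fin d)).powersetCard k, ∏ i ∈ S, (μ i : ℂ) =
      ∑ S ∈ (Finset.univ : Finset (Fin d)).powersetCard k, ∏ i ∈ S, (μ (σ i) : ℂ) := by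
    symm
    refine Finset.sum_bij (fun S _ => S.map σ.toEmbedding) ?_ ?_ ?_ ?_
    · intro S hS; simpa using hS
    · intro S _ T _ h; exact Finset.map_injective _ h
    · intro S hS
      refine ⟨S.map σ.symm.toEmbedding, by simpa using hS, ?_⟩
      ext x; simp
    · intro S _
      rw [Finset.prod_map]; rfl
  rw [Complex.ofReal_sum]
  calc _ = ∑ S ∈ (Finset.univ : Finset (Fin d)).powersetCard k, ∏ i ∈ S, (μ (σ i) : ℂ) := by
        refine Finset.sum_congr rfl fun S _ => ?_
        rw [← Real.finsetProd_rpow _ _ (fun i _ => hz0 i)]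
        simp only [e1, Complex.ofReal_prod]
    _ = _ := by
        rw [← c3, ← c1, c2]
        refine Finset.sum_congr rfl fun I _ => Finset.sum_congr rfl fun J _ => ?_
        rw [Real.mul_rpow (Finset.prod_nonneg fun i _ => ha0 i)
          (Finset.prod_nonneg fun i _ => hb0 i), ← Real.finsetProd_rpow _ _ (fun i _ => ha0 i),
          ← Real.finsetProd_rpow _ _ (fun i _ => hb0 i)]
        push_cast
        rfl

theorem lim_upper {T : Type*} (s : Finset T) (x g : T → ℝ) (hx : ∀ w, 0 ≤ x w) (hg : ∀ w, 0 ≤ g w)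
    (y : ℝ → ℝ) (P : ℝ) (hy : ∀ p, 0 < p → 0 ≤ y p)
    (h1 : ∀ p, 0 < p → y p ^ p ≤ ∑ w ∈ s, x w ^ p * g w)
    (hlim : Tendsto y atTop (𝓝 P)) (q : ℝ) (hq : 0 ≤ q)
    (hxq : ∀ w ∈ s, g w ≠ 0 → x w ≤ q) : P ≤ q := by
  set G : ℝ := ∑ w ∈ s, g w + 1 with hG
  have hG0 : 0 < G := by
    have := Finset.sum_nonneg (fun w (_ : w ∈ s) => hg w)
    linarith
  have hb : ∀ p, 0 < p → y p ≤ G ^ (1/p) * q := by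
    intro p hp
    have e1 : y p ^ p ≤ G * q ^ p := by
      refine (h1 p hp).trans ?_
      have e2 : ∑ w ∈ s, x w ^ p * g w ≤ ∑ w ∈ s, q ^ p * g w := by
        refine Finset.sum_le_sum fun w hw => ?_
        by_cases h0 : g w = 0
        · simp [h0]
        · exact mul_le_mul_of_nonneg_right
            (Real.rpow_le_rpow (hx w) (hxq w hw h0) hp.le) (hg w)
      rw [← Finset.mul_sum] at e2
      have e3 := Real.rpow_nonneg hq p
      nlinarith
    have e4 := Real.rpow_le_rpow (Real.rpow_nonneg (hy p hp) p) e1 (by positivity : 0 ≤ 1/p)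
    rw [Real.mul_rpow hG0.le (Real.rpow_nonneg hq p), ← Real.rpow_mul (hy p hp),
      ← Real.rpow_mul hq, mul_one_div_cancel hp.ne', Real.rpow_one, Real.rpow_one] at e4
    exact e4
  have hlim2 : Tendsto (fun p : ℝ => G ^ (1/p) * q) atTop (𝓝 q) := by
    have h0 : Tendsto (fun p : ℝ => 1/p) atTop (𝓝 0) := by
      simpa using tendsto_inv_atTop_zero (𝕜 := ℝ)
    have := ((Real.continuousAt_const_rpow hG0.ne' (b := 0)).tendsto.comp h0).mul_const q
    simpa [Function.comp_def] using this
  refine le_of_tendsto_of_tendsto hlim hlim2 ?_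
  filter_upwards [eventually_gt_atTop 0] with p hp using hb p hp

theorem lim_lower {T : Type*} (s : Finset T) (x g : T → ℝ) (hx : ∀ w, 0 ≤ x w) (hg : ∀ w, 0 ≤ g w)
    (y : ℝ → ℝ) (P C : ℝ) (hC : 0 < C) (hy : ∀ p, 0 < p → 0 ≤ y p)
    (h1 : ∀ p, 0 < p → ∑ w ∈ s, x w ^ p * g w ≤ C * y p ^ p)
    (hlim : Tendsto y atTop (𝓝 P)) (w : T) (hw : w ∈ s) (hgw : g w ≠ 0) : x w ≤ P := by
  have hgw' : 0 < g w := lt_of_le_of_ne (hg w) (Ne.symm hgw)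
  have hb : ∀ p, 0 < p → (g w / C) ^ (1/p) * x w ≤ y p := by
    intro p hp
    have e1 : (g w / C) * x w ^ p ≤ y p ^ p := by
      have e2 := Finset.single_le_sum (f := fun w => x w ^ p * g w)
        (fun w _ => mul_nonneg (Real.rpow_nonneg (hx w) p) (hg w)) hw
      have e3 := e2.trans (h1 p hp)
      rw [div_mul_eq_mul_div, div_le_iff₀ hC]
      linarith
    have e4 := Real.rpow_le_rpow (by have := Real.rpow_nonneg (hx w) p; positivity) e1
      (by positivity : 0 ≤ 1/p)
    rw [Real.mul_rpow (by positivity) (Real.rpow_nonneg (hx w) p), ← Real.rpow_mul (hy p hp),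
      ← Real.rpow_mul (hx w), mul_one_div_cancel hp.ne', Real.rpow_one, Real.rpow_one] at e4
    exact e4
  have hlim2 : Tendsto (fun p : ℝ => (g w / C) ^ (1/p) * x w) atTop (𝓝 (x w)) := by
    have h0 : Tendsto (fun p : ℝ => 1/p) atTop (𝓝 0) := by
      simpa using tendsto_inv_atTop_zero (𝕜 := ℝ)
    have := ((Real.continuousAt_const_rpow (div_pos hgw' hC).ne' (b := 0)).tendsto.comp h0).mul_const
      (x w)
    simpa [Function.comp_def] using this
  refine le_of_tendsto_of_tendsto hlim2 hlim ?_
  filter_upwards [eventually_gt_atTop 0] with p hp using hb p hp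

section combi
variable {d : ℕ} (a : Fin d → ℝ)

theorem prod_sdiff_le (ha : Antitone a) (ha0 : ∀ i, 0 ≤ a i) (k : Fin d) (I : Finset (Fin d)) :
    ∏ i ∈ I \ Finset.Iic k, a i ≤ a k ^ (I \ Finset.Iic k).card := by
  refine (Finset.prod_le_prod (fun i _ => ha0 i) (fun i hi => ?_)).trans_eq (Finset.prod_const _)
  simp only [Finset.mem_sdiff, Finset.mem_Iic, not_le] at hi
  exact ha hi.2.le

theorem le_prod_sdiff (ha : Antitone a) (ha0 : ∀ i, 0 ≤ a i) (k : Fin d) (I : Finset (Fin d)) :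
    a k ^ (Finset.Iic k \ I).card ≤ ∏ i ∈ Finset.Iic k \ I, a i := by
  refine (Finset.prod_const _).symm.trans_le (Finset.prod_le_prod (fun i _ => ha0 k) (fun i hi => ?_))
  simp only [Finset.mem_sdiff, Finset.mem_Iic] at hi
  exact ha hi.1

theorem card_sdiff_Iic (k : Fin d) (I : Finset (Fin d)) (hI : I.card = (k : ℕ) + 1) :
    (I \ Finset.Iic k).card = (Finset.Iic k \ I).card := by
  have h1 := Finset.card_sdiff_add_card_inter I (Finset.Iic k)
  have h2 := Finset.card_sdiff_add_card_inter (Finset.Iic k) I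
  rw [Finset.inter_comm] at h2
  rw [Fin.card_Iic] at h2
  omega

theorem prod_le_top (ha : Antitone a) (ha0 : ∀ i, 0 ≤ a i)
    (k : Fin d) (I : Finset (Fin d)) (hI : I.card = (k : ℕ) + 1) :
    ∏ i ∈ I, a i ≤ ∏ i ∈ Finset.Iic k, a i := by
  rw [← Finset.prod_inter_mul_prod_sdiff I (Finset.Iic k),
    ← Finset.prod_inter_mul_prod_sdiff (Finset.Iic k) I, Finset.inter_comm (Finset.Iic k) I]
  refine mul_le_mul_of_nonneg_left ?_ (Finset.prod_nonneg fun i _ => ha0 i)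
  refine (prod_sdiff_le a ha ha0 k I).trans ?_
  rw [card_sdiff_Iic k I hI]
  exact le_prod_sdiff a ha ha0 k I

theorem prod_eq_top (ha : Antitone a)
    (k : Fin d) (I : Finset (Fin d)) (hI : I.card = (k : ℕ) + 1)
    (h1 : Finset.univ.filter (fun i => a k < a i) ⊆ I)
    (h2 : I ⊆ Finset.univ.filter (fun i => a k ≤ a i)) :
    ∏ i ∈ I, a i = ∏ i ∈ Finset.Iic k, a i := by
  rw [← Finset.prod_inter_mul_prod_sdiff I (Finset.Iic k),
    ← Finset.prod_inter_mul_prod_sdiff (Finset.Iic k) I, Finset.inter_comm (Finset.Iic k) I]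
  congr 1
  rw [Finset.prod_congr rfl (g := fun _ => a k), Finset.prod_const, card_sdiff_Iic k I hI,
    Finset.prod_congr (s₁ := Finset.Iic k \ I) rfl (g := fun _ => a k), Finset.prod_const]
  · intro i hi
    simp only [Finset.mem_sdiff, Finset.mem_Iic] at hi
    refine le_antisymm (not_lt.1 fun h => hi.2 (h1 (by simpa using h))) (ha hi.1)
  · intro i hi
    simp only [Finset.mem_sdiff, Finset.mem_Iic, not_le] at hi
    exact le_antisymm (ha hi.2.le) (by simpa using h2 hi.1)

theorem conform_of_prod_eq (ha : Antitone a) (ha0 : ∀ i, 0 ≤ a i)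
    (k : Fin d) (I : Finset (Fin d)) (hI : I.card = (k : ℕ) + 1) (hk : 0 < a k)
    (h : ∏ i ∈ I, a i = ∏ i ∈ Finset.Iic k, a i) :
    Finset.univ.filter (fun i => a k < a i) ⊆ I ∧
    I ⊆ Finset.univ.filter (fun i => a k ≤ a i) := by
  have hpos : 0 < ∏ i ∈ Finset.Iic k, a i :=
    Finset.prod_pos fun i hi => hk.trans_le (ha (by simpa using hi))
  have hIpos : ∀ i ∈ I, 0 < a i := fun i hi => by
    refine lt_of_le_of_ne (ha0 i) fun h0 => ?_
    rw [← h, Finset.prod_eq_zero hi h0.symm] at hpos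
    exact lt_irrefl _ hpos
  rw [← Finset.prod_inter_mul_prod_sdiff I (Finset.Iic k),
    ← Finset.prod_inter_mul_prod_sdiff (Finset.Iic k) I, Finset.inter_comm (Finset.Iic k) I] at h
  have hne : ∏ i ∈ I ∩ Finset.Iic k, a i ≠ 0 :=
    (Finset.prod_pos fun i hi => hIpos i (Finset.mem_inter.1 hi).1).ne'
  have h3 := mul_left_cancel₀ hne h
  have h4 := prod_sdiff_le a ha ha0 k I
  have h5 := le_prod_sdiff a ha ha0 k I
  rw [← card_sdiff_Iic k I hI] at h5
  constructor
  · intro i hi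
    simp only [Finset.mem_filter, Finset.mem_univ, true_and] at hi
    by_contra hiI
    have hik : i ≤ k := not_lt.1 fun hh => absurd (ha hh.le) (not_le.2 hi)
    have : ∏ j ∈ Finset.Iic k \ I, a k < ∏ j ∈ Finset.Iic k \ I, a j := by
      refine Finset.prod_lt_prod (fun _ _ => hk) (fun j hj => ?_) ⟨i, by simp [hik, hiI], hi⟩
      simp only [Finset.mem_sdiff, Finset.mem_Iic] at hj
      exact ha hj.1
    rw [Finset.prod_const, ← card_sdiff_Iic k I hI] at this
    linarith
  · intro i hi
    simp only [Finset.mem_filter, Finset.mem_univ, true_and]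
    by_contra hlt
    rw [not_le] at hlt
    have hik : k < i := not_le.1 fun hh => absurd (ha hh) (not_le.2 hlt)
    have : ∏ j ∈ I \ Finset.Iic k, a j < ∏ j ∈ I \ Finset.Iic k, a k := by
      refine Finset.prod_lt_prod (fun j hj => hIpos j (Finset.mem_sdiff.1 hj).1)
        (fun j hj => ?_) ⟨i, by simp [hik, hi], hlt⟩
      simp only [Finset.mem_sdiff, Finset.mem_Iic, not_le] at hj
      exact ha hj.2.le
    rw [Finset.prod_const] at this
    linarith

end combi

theorem gramDet_ne_zero_iff {d n : ℕ} (U : Matrix (Fin d) (Fin d) ℂ) (I J : Finset (Fin d))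
    (hI : I.card = n) (hJ : J.card = n) :
    gramDet U I J ≠ 0 ↔ (U.submatrix (fun r : Fin n => ((I.orderIsoOfFin hI r : Fin d)))
      (fun c : Fin n => ((J.orderIsoOfFin hJ c : Fin d)))).det ≠ 0 := by
  rw [gram_eq U I J hI hJ]
  simp

theorem gramDet_transpose {d n : ℕ} (U : Matrix (Fin d) (Fin d) ℂ) (I J : Finset (Fin d))
    (hI : I.card = n) (hJ : J.card = n) :
    gramDet Uᵀ J I ≠ 0 ↔ gramDet U I J ≠ 0 := by
  rw [gramDet_ne_zero_iff Uᵀ J I hJ hI, gramDet_ne_zero_iff U I J hI hJ, ← Matrix.det_transpose]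
  rfl

theorem gramDet_ne_zero_iff_li {d : ℕ} (U : Matrix (Fin d) (Fin d) ℂ) (I J : Finset (Fin d))
    (h : I.card = J.card) :
    gramDet U I J ≠ 0 ↔ LinearIndependent ℂ (fun i : I => fun j : J => U i j) := by
  have e : I ≃ J := Finset.equivOfCardEq h
  set X := U.submatrix (Subtype.val : I → Fin d) (Subtype.val : J → Fin d) with hX
  have h2 : (Xᴴ * X).submatrix e e = (X.submatrix id e)ᴴ * X.submatrix id e := by
    ext i j
    simp [Matrix.mul_apply]
  have h3 : gramDet U I J ≠ 0 ↔ (X.submatrix id e).det ≠ 0 := by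
    rw [gramDet, ← hX, ← Matrix.det_submatrix_equiv_self e, h2, Matrix.det_mul,
      Matrix.det_conjTranspose]
    simp
  rw [h3, ← isUnit_iff_ne_zero, ← Matrix.isUnit_iff_isUnit_det,
    ← Matrix.linearIndependent_rows_iff_isUnit]
  let f : (J → ℂ) ≃ₗ[ℂ] (I → ℂ) := LinearEquiv.funCongrLeft ℂ ℂ e
  have h4 : (X.submatrix id e).row = f ∘ (fun i : I => fun j : J => U i j) := by
    ext i j
    simp [f, LinearEquiv.funCongrLeft_apply, LinearMap.funLeft_apply, hX]
  rw [h4]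
  exact f.toLinearMap.linearIndependent_iff_of_injOn f.injective.injOn

theorem extend_minor {d : ℕ} (U : Matrix (Fin d) (Fin d) ℂ)
    (hU : Uᴴ * U = 1) (R J₀ J : Finset (Fin d)) (hc : R.card = J₀.card) (hJ : J₀ ⊆ J)
    (hg : gramDet U R J₀ ≠ 0) : ∃ I, R ⊆ I ∧ I.card = J.card ∧ gramDet U I J ≠ 0 := by
  rw [gramDet_ne_zero_iff_li U R J₀ hc] at hg
  let v : Fin d → (J → ℂ) := fun i j => U i j
  have h1 : LinearIndepOn ℂ v (R : Set (Fin d)) := by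
    let f : (J → ℂ) →ₗ[ℂ] (J₀ → ℂ) := LinearMap.funLeft ℂ ℂ (fun j => ⟨j.1, hJ j.2⟩)
    exact LinearIndependent.of_comp f hg
  obtain ⟨S, -, hRS, hspan, hli⟩ := exists_linearIndepOn_extension h1 (Set.subset_univ _)
  have htop : ⊤ ≤ Submodule.span ℂ (Set.range (fun i : S => v i)) := by
    have e1 : Set.range (fun i : S => v i) = Set.image v S := by
      rw [Set.image_eq_range]
    rw [e1]
    intro w _
    let w' : Fin d → ℂ := fun i => if h : i ∈ J then w ⟨i, h⟩ else 0
    have e2 : w = ∑ i, (w' ᵥ* Uᴴ) i • v i := by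
      have e3 : (w' ᵥ* Uᴴ) ᵥ* U = w' := by
        rw [Matrix.vecMul_vecMul, hU, Matrix.vecMul_one]
      ext j
      have e4 := congrFun e3 j
      have e5 : w' j = w j := by simp [w']
      rw [← e5, ← e4]
      simp [Matrix.vecMul, dotProduct, v]
    rw [e2]
    exact Submodule.sum_mem _ fun i _ => Submodule.smul_mem _ _ (hspan ⟨i, trivial, rfl⟩)
  classical
  refine ⟨S.toFinset, ?_, ?_, ?_⟩
  · intro i hi; simpa using hRS hi
  · have b := Module.Basis.mk hli htop
    have := Module.finrank_eq_card_basis b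
    rw [Module.finrank_fintype_fun_eq_card] at this
    rw [Set.toFinset_card, ← this]; simp
  · have hcard : S.toFinset.card = J.card := by
      have b := Module.Basis.mk hli htop
      have := Module.finrank_eq_card_basis b
      rw [Module.finrank_fintype_fun_eq_card] at this
      rw [Set.toFinset_card, ← this]; simp
    rw [gramDet_ne_zero_iff_li U _ _ hcard]
    have : LinearIndepOn ℂ v (S.toFinset : Set (Fin d)) := by simpa using hli
    exact this

theorem blockMinorCond_iff {d : ℕ} (U : Matrix (Fin d) (Fin d) ℂ) (a b : Fin d → ℝ) (k : Fin d) :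
    BlockMinorCond U a b k ↔ ∃ I J : Finset (Fin d), I.card = (k : ℕ) + 1 ∧ J.card = (k : ℕ) + 1 ∧
    Finset.univ.filter (fun i => a k < a i) ⊆ I ∧
    I ⊆ Finset.univ.filter (fun i => a k ≤ a i) ∧
    Finset.univ.filter (fun i => b k < b i) ⊆ J ∧
    J ⊆ Finset.univ.filter (fun i => b k ≤ b i) ∧ gramDet U I J ≠ 0 := by
  constructor
  · rintro ⟨I, J, hI, hJ, h1, h2, h3, h4, h5⟩
    exact ⟨I, J, hI, hJ, h1, h2, h3, h4, (gramDet_ne_zero_iff U I J hI hJ).2 h5⟩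
  · rintro ⟨I, J, hI, hJ, h1, h2, h3, h4, h5⟩
    exact ⟨I, J, hI, hJ, h1, h2, h3, h4, (gramDet_ne_zero_iff U I J hI hJ).1 h5⟩

theorem blockMinorCond_transpose {d : ℕ} (U : Matrix (Fin d) (Fin d) ℂ) (a b : Fin d → ℝ)
    (k : Fin d) (h : BlockMinorCond U a b k) : BlockMinorCond Uᵀ b a k := by
  rw [blockMinorCond_iff] at h ⊢
  obtain ⟨I, J, hI, hJ, h1, h2, h3, h4, h5⟩ := h
  exact ⟨J, I, hJ, hI, h3, h4, h1, h2, (gramDet_transpose U I J hI hJ).2 h5⟩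

/-- Extension of the minor condition past the last positive product. -/
theorem blockMinorCond_of_zero {d : ℕ} (U : Matrix (Fin d) (Fin d) ℂ) (hU : Uᴴ * U = 1)
    (a b : Fin d → ℝ) (ha : Antitone a) (hb : Antitone b) (ha0 : ∀ i, 0 ≤ a i)
    (k k₀ : Fin d) (hk : k₀ ≤ k) (hz : a k₀ = 0)
    (hpos : ∀ i, i < k₀ → 0 < a i) (hcond : ∀ i, i < k₀ → BlockMinorCond U a b i) :
    BlockMinorCond U a b k := by
  have hak : a k = 0 := le_antisymm ((ha hk).trans hz.le) (ha0 k)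
  have hT : (Finset.univ.filter (fun i => b k < b i)) ⊆ Finset.Iio k := by
    intro i hi
    simp only [Finset.mem_filter, Finset.mem_univ, true_and, Finset.mem_Iio] at hi ⊢
    exact not_le.1 fun h => absurd (hb h) (not_le.2 hi)
  have hTc : (Finset.univ.filter (fun i => b k < b i)).card ≤ k := by
    have := Finset.card_le_card hT
    rwa [Fin.card_Iio] at this
  have hB : Finset.Iic k ⊆ Finset.univ.filter (fun i => b k ≤ b i) := by
    intro i hi
    simp only [Finset.mem_filter, Finset.mem_univ, true_and, Finset.mem_Iic] at hi ⊢
    exact hb hi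
  have hBc : (k : ℕ) + 1 ≤ (Finset.univ.filter (fun i => b k ≤ b i)).card := by
    have := Finset.card_le_card hB
    rwa [Fin.card_Iic] at this
  have main : ∃ J₀ : Finset (Fin d), J₀.card = (Finset.Iio k₀).card ∧
      gramDet U (Finset.Iio k₀) J₀ ≠ 0 ∧
      J₀ ⊆ Finset.univ.filter (fun i => b k ≤ b i) ∧
      (Finset.univ.filter (fun i => b k < b i) ∪ J₀).card ≤ (k : ℕ) + 1 := by
    rcases Nat.eq_zero_or_pos (k₀ : ℕ) with h0 | h0
    · have hI : Finset.Iio k₀ = ∅ := by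
        ext i; simp only [Finset.mem_Iio, Finset.notMem_empty, iff_false, not_lt, Fin.le_def]; omega
      refine ⟨∅, by simp [hI], ?_, by simp, by simp; omega⟩
      rw [hI, gramDet, Matrix.det_isEmpty]
      exact one_ne_zero
    · let m : Fin d := ⟨k₀ - 1, by omega⟩
      have hm : m < k₀ := by rw [Fin.lt_def]; simp [m]; omega
      obtain ⟨I, J, hI, hJ, h1, h2, h3, h4, h5⟩ := (blockMinorCond_iff U a b m).1 (hcond m hm)
      have hmc : (m : ℕ) + 1 = k₀ := by simp [m]; omega
      have hIeq : I = Finset.Iio k₀ := by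
        refine Finset.eq_of_subset_of_card_le ?_ (by rw [Fin.card_Iio, hI, hmc])
        intro i hi
        have := h2 hi
        simp only [Finset.mem_filter, Finset.mem_univ, true_and, Finset.mem_Iio] at this ⊢
        refine not_le.1 fun hh => ?_
        have e1 := ha hh
        have e2 := hpos m hm
        linarith
      refine ⟨J, by rw [Fin.card_Iio, hJ, hmc], hIeq ▸ h5, ?_, ?_⟩
      · intro j hj
        have := h4 hj
        simp only [Finset.mem_filter, Finset.mem_univ, true_and] at this ⊢
        exact (hb (hm.le.trans hk)).trans this
      · rcases (hb (hm.le.trans hk)).eq_or_lt with he | hl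
        · rw [he, Finset.union_eq_right.2 h3, hJ, hmc]
          have : (k₀ : ℕ) ≤ k := hk
          omega
        · have : J ⊆ Finset.univ.filter (fun i => b k < b i) := by
            intro j hj
            have := h4 hj
            simp only [Finset.mem_filter, Finset.mem_univ, true_and] at this ⊢
            linarith
          rw [Finset.union_eq_left.2 this]
          omega
  obtain ⟨J₀, hJ₀, hg, hsub, hcard⟩ := main
  obtain ⟨J, hJ1, hJ2, hJ3⟩ := Finset.exists_subsuperset_card_eq
    (Finset.union_subset (t := J₀) (u := Finset.univ.filter (fun i => b k ≤ b i))
      (s := Finset.univ.filter (fun i => b k < b i)) (by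
        intro i hi
        simp only [Finset.mem_filter, Finset.mem_univ, true_and] at hi ⊢
        exact hi.le) hsub) hcard hBc
  obtain ⟨I, hI1, hI2, hI3⟩ := extend_minor U hU (Finset.Iio k₀) J₀ J hJ₀.symm
    (Finset.subset_union_right.trans hJ1) hg
  refine (blockMinorCond_iff U a b k).2 ⟨I, J, hI2.trans hJ3, hJ3, ?_, ?_,
    Finset.subset_union_left.trans hJ1, hJ2, hI3⟩
  · refine Finset.Subset.trans ?_ hI1
    intro i hi
    simp only [Finset.mem_filter, Finset.mem_univ, true_and, Finset.mem_Iio] at hi ⊢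
    refine not_le.1 fun hh => ?_
    have := ha hh
    linarith
  · intro i _
    simp only [Finset.mem_filter, Finset.mem_univ, true_and]
    rw [hak]; exact ha0 i

theorem limit_facts
    {d : ℕ} (A B V W : Matrix (Fin d) (Fin d) ℂ) (a b : Fin d → ℝ)
    (hV : V ∈ Matrix.unitaryGroup (Fin d) ℂ)
    (hW : W ∈ Matrix.unitaryGroup (Fin d) ℂ)
    (ha0 : ∀ i, 0 ≤ a i) (hb0 : ∀ i, 0 ≤ b i)
    (hAd : A = V * Matrix.diagonal (fun i => (a i : ℂ)) * Vᴴ)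
    (hBd : B = W * Matrix.diagonal (fun i => (b i : ℂ)) * Wᴴ)
    (lam : Fin d → ℝ)
    (hlam : ∀ i, Tendsto (fun p : ℝ => eigsDesc (Zmat A B p) i) atTop (𝓝 (lam i))) (k : Fin d) :
    (∀ q : ℝ, 0 ≤ q → (∀ I J : Finset (Fin d), I.card = (k : ℕ) + 1 → J.card = (k : ℕ) + 1 →
      gramDet (Vᴴ * W) I J ≠ 0 → (∏ i ∈ I, a i) * (∏ j ∈ J, b j) ≤ q) →
      ∏ i ∈ Finset.Iic k, lam i ≤ q) ∧
    (∀ I J : Finset (Fin d), I.card = (k : ℕ) + 1 → J.card = (k : ℕ) + 1 →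
      gramDet (Vᴴ * W) I J ≠ 0 → (∏ i ∈ I, a i) * (∏ j ∈ J, b j) ≤ ∏ i ∈ Finset.Iic k, lam i) := by
  have key := zmat_esymm A B V W a b hV hW ha0 hb0 hAd hBd
  set U := Vᴴ * W
  let s := ((Finset.univ : Finset (Fin d)).powersetCard ((k : ℕ) + 1)) ×ˢ
    ((Finset.univ : Finset (Fin d)).powersetCard ((k : ℕ) + 1))
  let x : Finset (Fin d) × Finset (Fin d) → ℝ := fun w => (∏ i ∈ w.1, a i) * (∏ j ∈ w.2, b j)
  let g : Finset (Fin d) × Finset (Fin d) → ℝ := fun w => ‖gramDet U w.1 w.2‖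
  let y : ℝ → ℝ := fun p => ∏ i ∈ Finset.Iic k, eigsDesc (Zmat A B p) i
  have hx : ∀ w, 0 ≤ x w := fun w =>
    mul_nonneg (Finset.prod_nonneg fun i _ => ha0 i) (Finset.prod_nonneg fun i _ => hb0 i)
  have hg : ∀ w, 0 ≤ g w := fun w => norm_nonneg _
  have hy : ∀ p, 0 < p → 0 ≤ y p := fun p hp => Finset.prod_nonneg fun i _ => (key p hp).1 i
  have hlim : Tendsto y atTop (𝓝 (∏ i ∈ Finset.Iic k, lam i)) :=
    tendsto_finsetProd _ fun i _ => hlam i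
  have hgr : ∀ I J : Finset (Fin d), I.card = (k : ℕ) + 1 → J.card = (k : ℕ) + 1 →
      gramDet U I J = ((‖gramDet U I J‖ : ℝ) : ℂ) := by
    intro I J hI hJ
    rw [gram_eq U I J hI hJ, Complex.norm_real, Real.norm_of_nonneg (by positivity)]
  have hsum : ∀ p, 0 < p → ∑ S ∈ (Finset.univ : Finset (Fin d)).powersetCard ((k : ℕ) + 1),
        (∏ i ∈ S, eigsDesc (Zmat A B p) i) ^ p = ∑ w ∈ s, x w ^ p * g w := by
    intro p hp
    have h := (key p hp).2 ((k : ℕ) + 1)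
    apply Complex.ofReal_injective
    rw [h, Finset.sum_product, Complex.ofReal_sum]
    refine Finset.sum_congr rfl fun I hI => ?_
    rw [Complex.ofReal_sum]
    refine Finset.sum_congr rfl fun J hJ => ?_
    rw [hgr I J (by simpa using hI) (by simpa using hJ), Complex.ofReal_mul]
  have hmem : Finset.Iic k ∈ (Finset.univ : Finset (Fin d)).powersetCard ((k : ℕ) + 1) := by
    simp [Fin.card_Iic]
  have h1 : ∀ p, 0 < p → y p ^ p ≤ ∑ w ∈ s, x w ^ p * g w := by
    intro p hp
    rw [← hsum p hp]
    exact Finset.single_le_sum (f := fun S => (∏ i ∈ S, eigsDesc (Zmat A B p) i) ^ p)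
      (fun S _ => Real.rpow_nonneg (Finset.prod_nonneg fun i _ => (key p hp).1 i) p) hmem
  let C : ℝ := ((Finset.univ : Finset (Fin d)).powersetCard ((k : ℕ) + 1)).card
  have hC : 0 < C := by
    simp only [C, Nat.cast_pos]
    exact Finset.card_pos.2 ⟨_, hmem⟩
  have h2 : ∀ p, 0 < p → ∑ w ∈ s, x w ^ p * g w ≤ C * y p ^ p := by
    intro p hp
    rw [← hsum p hp]
    refine (Finset.sum_le_card_nsmul _ _ (y p ^ p) fun S hS => ?_).trans_eq (nsmul_eq_mul _ _)
    refine Real.rpow_le_rpow (Finset.prod_nonneg fun i _ => (key p hp).1 i) ?_ hp.le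
    exact prod_le_top _ (eigsDesc_antitone _) (key p hp).1 k S (by simpa using hS)
  constructor
  · intro q hq hall
    refine lim_upper s x g hx hg y _ hy h1 hlim q hq fun w hw hgw => ?_
    simp only [s, Finset.mem_product, Finset.mem_powersetCard_univ] at hw
    exact hall w.1 w.2 hw.1 hw.2 (by simpa [g] using hgw)
  · intro I J hI hJ hne
    exact lim_lower s x g hx hg y _ C hC hy h2 hlim (I, J) (by simp [s, hI, hJ]) (by simpa [g] using hne)

theorem top_eq_of_cond {d : ℕ} (U : Matrix (Fin d) (Fin d) ℂ) (a b lam : Fin d → ℝ)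
    (ha : Antitone a) (hb : Antitone b) (ha0 : ∀ i, 0 ≤ a i) (hb0 : ∀ i, 0 ≤ b i) (k : Fin d)
    (hup : ∀ q : ℝ, 0 ≤ q → (∀ I J : Finset (Fin d), I.card = (k : ℕ) + 1 → J.card = (k : ℕ) + 1 →
      gramDet U I J ≠ 0 → (∏ i ∈ I, a i) * (∏ j ∈ J, b j) ≤ q) →
      ∏ i ∈ Finset.Iic k, lam i ≤ q)
    (hlo : ∀ I J : Finset (Fin d), I.card = (k : ℕ) + 1 → J.card = (k : ℕ) + 1 →
      gramDet U I J ≠ 0 → (∏ i ∈ I, a i) * (∏ j ∈ J, b j) ≤ ∏ i ∈ Finset.Iic k, lam i) :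
    ∏ i ∈ Finset.Iic k, lam i ≤ ∏ i ∈ Finset.Iic k, (a i * b i) ∧
    (BlockMinorCond U a b k → ∏ i ∈ Finset.Iic k, lam i = ∏ i ∈ Finset.Iic k, (a i * b i)) ∧
    (0 < a k → 0 < b k → ∏ i ∈ Finset.Iic k, lam i = ∏ i ∈ Finset.Iic k, (a i * b i) →
      BlockMinorCond U a b k) := by
  rw [Finset.prod_mul_distrib]
  have hPa : 0 ≤ ∏ i ∈ Finset.Iic k, a i := Finset.prod_nonneg fun i _ => ha0 i
  have hPb : 0 ≤ ∏ i ∈ Finset.Iic k, b i := Finset.prod_nonneg fun i _ => hb0 i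
  have hle : ∏ i ∈ Finset.Iic k, lam i ≤ (∏ i ∈ Finset.Iic k, a i) * ∏ i ∈ Finset.Iic k, b i := by
    refine hup _ (mul_nonneg hPa hPb) fun I J hI hJ _ => ?_
    exact mul_le_mul (prod_le_top a ha ha0 k I hI) (prod_le_top b hb hb0 k J hJ)
      (Finset.prod_nonneg fun i _ => hb0 i) hPa
  refine ⟨hle, fun h => ?_, fun hak hbk heq => ?_⟩
  · obtain ⟨I, J, hI, hJ, h1, h2, h3, h4, h5⟩ := (blockMinorCond_iff U a b k).1 h
    refine le_antisymm hle ?_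
    have := hlo I J hI hJ h5
    rwa [prod_eq_top a ha k I hI h1 h2, prod_eq_top b hb k J hJ h3 h4] at this
  · have hPa' : 0 < ∏ i ∈ Finset.Iic k, a i :=
      Finset.prod_pos fun i hi => hak.trans_le (ha (by simpa using hi))
    have hPb' : 0 < ∏ i ∈ Finset.Iic k, b i :=
      Finset.prod_pos fun i hi => hbk.trans_le (hb (by simpa using hi))
    have hex : ∃ I J : Finset (Fin d), I.card = (k : ℕ) + 1 ∧ J.card = (k : ℕ) + 1 ∧
        gramDet U I J ≠ 0 ∧ (∏ i ∈ Finset.Iic k, a i) * (∏ i ∈ Finset.Iic k, b i) ≤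
          (∏ i ∈ I, a i) * (∏ j ∈ J, b j) := by
      classical
      let s : Finset (Finset (Fin d) × Finset (Fin d)) := Finset.univ.filter fun w =>
        w.1.card = (k : ℕ) + 1 ∧ w.2.card = (k : ℕ) + 1 ∧ gramDet U w.1 w.2 ≠ 0
      rcases s.eq_empty_or_nonempty with hs | hs
      · exfalso
        have := hup 0 le_rfl fun I J hI hJ hne => by
          have : (I, J) ∈ s := by simp [s, hI, hJ, hne]
          rw [hs] at this
          simp at this
        rw [heq] at this
        have := mul_pos hPa' hPb'
        linarith
      · obtain ⟨w, hw, hmax⟩ := s.exists_max_image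
          (fun w => (∏ i ∈ w.1, a i) * (∏ j ∈ w.2, b j)) hs
        have hw' := (Finset.mem_filter.1 hw).2
        refine ⟨w.1, w.2, hw'.1, hw'.2.1, hw'.2.2, ?_⟩
        rw [← heq]
        refine hup _ (mul_nonneg (Finset.prod_nonneg fun i _ => ha0 i)
          (Finset.prod_nonneg fun i _ => hb0 i)) fun I J hI hJ hne => ?_
        exact hmax (I, J) (by simp [s, hI, hJ, hne])
    obtain ⟨I, J, hI, hJ, hne, hge⟩ := hex
    have eA := prod_le_top a ha ha0 k I hI
    have eB := prod_le_top b hb hb0 k J hJ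
    have hJ0 : 0 ≤ ∏ j ∈ J, b j := Finset.prod_nonneg fun i _ => hb0 i
    have hI0 : 0 ≤ ∏ j ∈ I, a j := Finset.prod_nonneg fun i _ => ha0 i
    have fA : ∏ i ∈ I, a i = ∏ i ∈ Finset.Iic k, a i := by
      refine le_antisymm eA ?_
      by_contra hlt
      rw [not_le] at hlt
      nlinarith
    have fB : ∏ i ∈ J, b i = ∏ i ∈ Finset.Iic k, b i := by
      refine le_antisymm eB ?_
      by_contra hlt
      rw [not_le] at hlt
      nlinarith
    obtain ⟨h1, h2⟩ := conform_of_prod_eq a ha ha0 k I hI hak fA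
    obtain ⟨h3, h4⟩ := conform_of_prod_eq b hb hb0 k J hJ hbk fB
    exact (blockMinorCond_iff U a b k).2 ⟨I, J, hI, hJ, h1, h2, h3, h4, hne⟩

/-- The last index always satisfies the minor condition. -/
theorem blockMinorCond_last {d : ℕ} (U : Matrix (Fin d) (Fin d) ℂ) (hU : Uᴴ * U = 1)
    (a b : Fin d → ℝ) (ha : Antitone a) (hb : Antitone b) (k : Fin d) (hk : (k : ℕ) + 1 = d) :
    BlockMinorCond U a b k := by
  have hle : ∀ i : Fin d, i ≤ k := fun i => by rw [Fin.le_def]; omega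
  obtain ⟨I, -, hI, hg⟩ := extend_minor U hU ∅ ∅ Finset.univ rfl (Finset.empty_subset _) (by
    rw [gramDet, Matrix.det_isEmpty]; exact one_ne_zero)
  rw [Finset.card_univ, Fintype.card_fin] at hI
  have hIu : I = Finset.univ := by
    rw [← Finset.card_eq_iff_eq_univ, hI, Fintype.card_fin]
  refine (blockMinorCond_iff U a b k).2 ⟨I, Finset.univ, by omega, by simp [hk], ?_, ?_, ?_, ?_, hg⟩
  · rw [hIu]; exact Finset.subset_univ _
  · intro i _; simpa using ha (hle i)
  · exact Finset.subset_univ _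
  · intro i _; simpa using hb (hle i)

theorem Iic_eq_insert {d : ℕ} (i : Fin d) : Finset.Iic i = insert i (Finset.Iio i) := by
  ext j; simp [le_iff_eq_or_lt]

/-- Comparison of the two sequences from the equality of products at block boundaries. -/
theorem seq_eq {d : ℕ} (c lam : Fin d → ℝ) (hc : Antitone c) (hl : Antitone lam)
    (hc0 : ∀ i, 0 ≤ c i) (hl0 : ∀ i, 0 ≤ lam i)
    (hle : ∀ k, ∏ i ∈ Finset.Iic k, lam i ≤ ∏ i ∈ Finset.Iic k, c i)
    (hbd : ∀ i, ∃ k, i ≤ k ∧ c k = c i ∧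
      ∏ i ∈ Finset.Iic k, lam i = ∏ i ∈ Finset.Iic k, c i) :
    ∀ i, lam i = c i := by
  intro i
  induction i using WellFoundedLT.induction with
  | ind i ih =>
  have hprev : ∏ j ∈ Finset.Iio i, lam j = ∏ j ∈ Finset.Iio i, c j :=
    Finset.prod_congr rfl fun j hj => ih j (by simpa using hj)
  by_cases h0 : ∏ j ∈ Finset.Iio i, c j = 0
  · obtain ⟨j, hj, hj0⟩ := Finset.prod_eq_zero_iff.1 h0
    have hji : j < i := by simpa using hj
    have e1 := hc hji.le
    have e2 := hl hji.le
    have e3 := ih j hji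
    have e4 := hc0 i
    have e5 := hl0 i
    linarith
  · have hpos : 0 < ∏ j ∈ Finset.Iio i, c j :=
      lt_of_le_of_ne (Finset.prod_nonneg fun j _ => hc0 j) (Ne.symm h0)
    have hni : i ∉ Finset.Iio i := by simp
    have h1 := hle i
    rw [Iic_eq_insert, Finset.prod_insert hni, Finset.prod_insert hni, hprev] at h1
    have h2 : lam i ≤ c i := le_of_mul_le_mul_right h1 hpos
    obtain ⟨k, hik, hck, hk⟩ := hbd i
    have hsplit : Finset.Iic k = Finset.Iio i ∪ Finset.Icc i k := by
      ext j
      simp only [Finset.mem_Iic, Finset.mem_union, Finset.mem_Iio, Finset.mem_Icc]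
      constructor
      · intro h; rcases lt_or_ge j i with h' | h'
        · exact Or.inl h'
        · exact Or.inr ⟨h', h⟩
      · rintro (h | h)
        · exact h.le.trans hik
        · exact h.2
    have hdisj : Disjoint (Finset.Iio i) (Finset.Icc i k) := by
      rw [Finset.disjoint_left]
      intro j hj hj'
      simp only [Finset.mem_Iio, Finset.mem_Icc] at hj hj'
      exact absurd hj'.1 (not_le.2 hj)
    rw [hsplit, Finset.prod_union hdisj, Finset.prod_union hdisj, hprev] at hk
    have h3 := mul_left_cancel₀ h0 hk
    have h4 : ∏ j ∈ Finset.Icc i k, c j = c i ^ (Finset.Icc i k).card := by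
      rw [← Finset.prod_const]
      refine Finset.prod_congr rfl fun j hj => ?_
      simp only [Finset.mem_Icc] at hj
      exact le_antisymm (hc hj.1) (hck ▸ hc hj.2)
    have h5 : ∏ j ∈ Finset.Icc i k, lam j ≤ lam i ^ (Finset.Icc i k).card := by
      rw [← Finset.prod_const]
      refine Finset.prod_le_prod (fun j _ => hl0 j) fun j hj => ?_
      simp only [Finset.mem_Icc] at hj
      exact hl hj.1
    refine le_antisymm h2 ?_
    have h6 : (Finset.Icc i k).card ≠ 0 := (Finset.card_pos.2 ⟨i, by simp [hik]⟩).ne'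
    rw [h3, h4] at h5
    exact (pow_le_pow_iff_left₀ (hc0 i) (hl0 i) h6).1 h5

/-- The maximal case: the limiting eigenvalues of `Z_p = (A^{p/2} B^p A^{p/2})^{1/p}`
satisfy `λ_i = a_i b_i` for all `i` iff the minor condition holds for every `k = 1,…,d`,
iff the minor condition holds for every `k` which is a block boundary of `a` or of `b`
(i.e. `k ∈ {i_1,…,i_{l-1}, j_1,…,j_{m-1}}`). -/
theorem anti_lie_trotter_maximal_case_tfae
    {d : ℕ} (A B V W : Matrix (Fin d) (Fin d) ℂ) (a b : Fin d → ℝ)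
    (hA : A.PosSemidef) (hB : B.PosSemidef)
    (hV : V ∈ Matrix.unitaryGroup (Fin d) ℂ)
    (hW : W ∈ Matrix.unitaryGroup (Fin d) ℂ)
    (ha : Antitone a) (hb : Antitone b)
    (ha0 : ∀ i, 0 ≤ a i) (hb0 : ∀ i, 0 ≤ b i)
    (hAd : A = V * Matrix.diagonal (fun i => (a i : ℂ)) * Vᴴ)
    (hBd : B = W * Matrix.diagonal (fun i => (b i : ℂ)) * Wᴴ)
    (lam : Fin d → ℝ)
    (hlam : ∀ i, Tendsto (fun p : ℝ => eigsDesc (Zmat A B p) i) atTop (𝓝 (lam i))) :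
    ((∀ i, lam i = a i * b i) ↔ ∀ k : Fin d, BlockMinorCond (Vᴴ * W) a b k) ∧
    ((∀ i, lam i = a i * b i) ↔
      ∀ k : Fin d, ∀ h : (k : ℕ) + 1 < d,
        (a ⟨(k : ℕ) + 1, h⟩ < a k ∨ b ⟨(k : ℕ) + 1, h⟩ < b k) →
          BlockMinorCond (Vᴴ * W) a b k) := by
  have hV1 : V * Vᴴ = 1 := Matrix.mem_unitaryGroup_iff.1 hV
  have hW1 : Wᴴ * W = 1 := Matrix.mem_unitaryGroup_iff'.1 hW
  have hU : (Vᴴ * W)ᴴ * (Vᴴ * W) = 1 := by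
    rw [Matrix.conjTranspose_mul, Matrix.conjTranspose_conjTranspose, Matrix.mul_assoc,
      ← Matrix.mul_assoc V, hV1, Matrix.one_mul, hW1]
  have hUt : ((Vᴴ * W)ᵀ)ᴴ * (Vᴴ * W)ᵀ = 1 := by
    have h2 : (Vᴴ * W) * (Vᴴ * W)ᴴ = 1 := mul_eq_one_comm.1 hU
    have h3 := congrArg Matrix.transpose h2
    rw [Matrix.transpose_mul, Matrix.transpose_one] at h3
    exact h3
  have hfacts := limit_facts A B V W a b hV hW ha0 hb0 hAd hBd lam hlam
  set U := Vᴴ * W with hUdef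
  have htop := fun k => top_eq_of_cond U a b lam ha hb ha0 hb0 k (hfacts k).1 (hfacts k).2
  have hl : Antitone lam := fun i j hij =>
    le_of_tendsto_of_tendsto' (hlam j) (hlam i) fun p => eigsDesc_antitone _ hij
  have hl0 : ∀ i, 0 ≤ lam i := fun i => by
    refine ge_of_tendsto (hlam i) ?_
    filter_upwards [eventually_gt_atTop 0] with p hp
    exact (zmat_esymm A B V W a b hV hW ha0 hb0 hAd hBd p hp).1 i
  have hc : Antitone (fun i => a i * b i) := fun i j hij =>
    mul_le_mul (ha hij) (hb hij) (hb0 j) (ha0 i)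
  have hc0 : ∀ i, 0 ≤ a i * b i := fun i => mul_nonneg (ha0 i) (hb0 i)
  have h12 : (∀ i, lam i = a i * b i) → ∀ k : Fin d, BlockMinorCond U a b k := by
    intro h
    have hp : ∀ k, 0 < a k → 0 < b k → BlockMinorCond U a b k := fun k hak hbk =>
      (htop k).2.2 hak hbk (Finset.prod_congr rfl fun i _ => h i)
    intro k
    by_cases hk : 0 < a k ∧ 0 < b k
    · exact hp k hk.1 hk.2
    have hne : (Finset.univ.filter fun i : Fin d => ¬ (0 < a i ∧ 0 < b i)).Nonempty :=
      ⟨k, by simpa using hk⟩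
    obtain ⟨k₀, hk₀, hmin⟩ := Finset.exists_min_image _ id hne
    have hk₀' : ¬ (0 < a k₀ ∧ 0 < b k₀) := (Finset.mem_filter.1 hk₀).2
    have hk₀k : k₀ ≤ k := hmin k (by simpa using hk)
    have hlt : ∀ i, i < k₀ → 0 < a i ∧ 0 < b i := fun i hi => by
      by_contra hcon
      exact absurd (hmin i (Finset.mem_filter.2 ⟨Finset.mem_univ _, hcon⟩)) (not_le.2 hi)
    rcases (ha0 k₀).eq_or_lt with hz | hz
    · exact blockMinorCond_of_zero U hU a b ha hb ha0 k k₀ hk₀k hz.symm (fun i hi => (hlt i hi).1)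
        (fun i hi => hp i (hlt i hi).1 (hlt i hi).2)
    · have hz' : b k₀ = 0 := le_antisymm (not_lt.1 fun hh => hk₀' ⟨hz, hh⟩) (hb0 k₀)
      have := blockMinorCond_of_zero Uᵀ hUt b a hb ha hb0 k k₀ hk₀k hz' (fun i hi => (hlt i hi).2)
        (fun i hi => blockMinorCond_transpose U a b i (hp i (hlt i hi).1 (hlt i hi).2))
      simpa using blockMinorCond_transpose Uᵀ b a k this
  have h31 : (∀ k : Fin d, ∀ h : (k : ℕ) + 1 < d,
        (a ⟨(k : ℕ) + 1, h⟩ < a k ∨ b ⟨(k : ℕ) + 1, h⟩ < b k) →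
          BlockMinorCond U a b k) → ∀ i, lam i = a i * b i := by
    intro h
    refine seq_eq (fun i => a i * b i) lam hc hl hc0 hl0 (fun k => (htop k).1) fun i => ?_
    have hne : (Finset.univ.filter fun k : Fin d => i ≤ k ∧ a k = a i ∧ b k = b i).Nonempty :=
      ⟨i, by simp⟩
    obtain ⟨k, hk, hmax⟩ := Finset.exists_max_image _ id hne
    obtain ⟨hik, hak, hbk⟩ := (Finset.mem_filter.1 hk).2
    refine ⟨k, hik, by simp only [hak, hbk], (htop k).2.1 ?_⟩
    by_cases hd : (k : ℕ) + 1 < d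
    · refine h k hd ?_
      by_contra hcon
      rw [not_or, not_lt, not_lt] at hcon
      have hkk : k < ⟨(k : ℕ) + 1, hd⟩ := by rw [Fin.lt_def]; simp
      have e1 := le_antisymm (ha hkk.le) hcon.1
      have e2 := le_antisymm (hb hkk.le) hcon.2
      have := hmax ⟨(k : ℕ) + 1, hd⟩ (Finset.mem_filter.2 ⟨Finset.mem_univ _,
        hik.trans hkk.le, e1.trans hak, e2.trans hbk⟩)
      exact absurd this (not_le.2 hkk)
    · exact blockMinorCond_last U hU a b ha hb k (by omega)
  exact ⟨⟨h12, fun h => h31 fun k _ _ => h k⟩, ⟨fun h k _ _ => h12 h k, h31⟩⟩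
end

section
/- For p > 0 let Z_p := (A_1^{p/2} A_2^{p/2} ⋯ A_{m-1}^{p/2} A_m^p A_{m-1}^{p/2} ⋯ A_2^{p/2} A_1^{p/2})^{1/p} and let λ_1(p) ≥ … ≥ λ_d(p) be its eigenvalues in decreasing order with multiplicities. Then for every i = 1, …, d the limit λ_i := lim_{p→∞} λ_i(p) exists. -/
open Matrix Filter Topology Finset
open scoped ComplexOrder

/-- For `n + 1` matrices `A_0, …, A_n`, this is
`Z_p = (A_0^{p/2} A_1^{p/2} ⋯ A_{n-1}^{p/2} A_n^p A_{n-1}^{p/2} ⋯ A_1^{p/2} A_0^{p/2})^{1/p}`. -/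
noncomputable def ZmatM {d n : ℕ} (A : Fin (n + 1) → Matrix (Fin d) (Fin d) ℂ)
    (p : ℝ) : Matrix (Fin d) (Fin d) ℂ :=
  psdPow ((List.ofFn fun l : Fin n => psdPow (A l.castSucc) (p / 2)).prod *
    psdPow (A (Fin.last n)) p *
    ((List.ofFn fun l : Fin n => psdPow (A l.castSucc) (p / 2)).reverse).prod) (1 / p)


/-- Evaluation of a formal exponential sum at `p`. -/
noncomputable def altEv (p : ℝ) : AddMonoidAlgebra ℂ ℝ →+* ℂ :=
  (AddMonoidAlgebra.lift ℂ ℂ ℝ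
    { toFun := fun x => ((Real.exp (p * x.toAdd) : ℝ) : ℂ)
      map_one' := by simp
      map_mul' := fun x y => by
        rw [toAdd_mul, mul_add, Real.exp_add]; push_cast; rfl }).toRingHom

lemma altEv_single (p x : ℝ) (c : ℂ) :
    altEv p (AddMonoidAlgebra.single x c) = c * ((Real.exp (p * x) : ℝ) : ℂ) := by
  simp [altEv, AddMonoidAlgebra.lift_single]

lemma altEv_apply (p : ℝ) (f : AddMonoidAlgebra ℂ ℝ) :
    altEv p f = ∑ x ∈ f.coeff.support, f.coeff x * ((Real.exp (p * x) : ℝ) : ℂ) := by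
  simp [altEv, AddMonoidAlgebra.lift_apply, Finsupp.sum]

lemma alt_expsum_root (f : AddMonoidAlgebra ℂ ℝ) (g : ℝ → ℝ)
    (hg : ∀ p > 0, 0 ≤ g p) (hfg : ∀ p > 0, (g p : ℂ) = altEv p f) :
    ∃ L : ℝ, Tendsto (fun p => g p ^ (1 / p)) atTop (𝓝 L) := by
  by_cases hf : f.coeff.support.Nonempty
  swap
  · refine ⟨0, ?_⟩
    apply tendsto_const_nhds.congr'
    filter_upwards [eventually_gt_atTop 0] with p hp
    have h := hfg p hp
    rw [Finset.not_nonempty_iff_eq_empty] at hf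
    rw [altEv_apply, hf] at h
    simp at h
    rw [h, Real.zero_rpow]
    positivity
  set m := f.coeff.support.max' hf with hm
  have hmem : m ∈ f.coeff.support := Finset.max'_mem _ _
  have hc : f.coeff m ≠ 0 := by simpa using hmem
  have h1 : Tendsto (fun p : ℝ => ∑ x ∈ f.coeff.support,
      f.coeff x * ((Real.exp (p * (x - m)) : ℝ) : ℂ)) atTop
      (𝓝 (∑ x ∈ f.coeff.support, if x = m then f.coeff m else 0)) := by
    apply tendsto_finsetSum
    intro x hx
    by_cases hxm : x = m
    · simp [hxm]
    · rw [if_neg hxm]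
      have hlt : x - m < 0 := by
        have := Finset.le_max' _ x hx
        exact sub_neg.mpr (lt_of_le_of_ne this hxm)
      have : Tendsto (fun p : ℝ => Real.exp (p * (x - m))) atTop (𝓝 0) :=
        Real.tendsto_exp_atBot.comp (tendsto_id.atTop_mul_const_of_neg hlt)
      have h2 := ((Complex.continuous_ofReal.tendsto 0).comp this).const_mul (f.coeff x)
      simpa using h2
  rw [Finset.sum_ite_eq' , if_pos hmem] at h1
  have h2 : Tendsto (fun p : ℝ => g p * Real.exp (- (p * m))) atTop (𝓝 ‖f.coeff m‖) := by
    refine h1.norm.congr' ?_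
    filter_upwards [eventually_gt_atTop 0] with p hp
    have : ∑ x ∈ f.coeff.support, f.coeff x * ((Real.exp (p * (x - m)) : ℝ) : ℂ)
        = ((g p * Real.exp (- (p * m)) : ℝ) : ℂ) := by
      rw [Complex.ofReal_mul, hfg p hp, altEv_apply, Finset.sum_mul]
      refine Finset.sum_congr rfl fun x _ => ?_
      rw [mul_assoc, ← Complex.ofReal_mul, ← Real.exp_add]
      congr 4; ring
    rw [this, Complex.norm_real, Real.norm_of_nonneg]
    exact mul_nonneg (hg p hp) (Real.exp_pos _).le
  have h3 : Tendsto (fun p : ℝ => 1 / p) atTop (𝓝 0) := by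
    simpa using tendsto_inv_atTop_zero (𝕜 := ℝ)
  have h4 := (h2.rpow h3 (Or.inl (norm_ne_zero_iff.mpr hc))).mul_const (Real.exp m)
  refine ⟨_, h4.congr' ?_⟩
  filter_upwards [eventually_gt_atTop 0] with p hp
  rw [Real.mul_rpow (hg p hp) (Real.exp_pos _).le, ← Real.exp_mul, mul_assoc, ← Real.exp_add]
  have : -(p * m) * (1 / p) + m = 0 := by field_simp; ring
  rw [this, Real.exp_zero, mul_one]

lemma alt_val_le {k d : ℕ} (f : Fin k → Fin d) (hf : StrictMono f) :
    ∀ (j : ℕ) (hj : j < k), j ≤ (f ⟨j, hj⟩).val := by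
  intro j
  induction j with
  | zero => intro _; exact Nat.zero_le _
  | succ j ih =>
    intro hj
    have h1 := ih (by omega)
    have h2 : f ⟨j, by omega⟩ < f ⟨j + 1, hj⟩ := hf (by simp [Fin.lt_def])
    rw [Fin.lt_def] at h2
    omega

lemma alt_prod_le {d k : ℕ} (hk : k ≤ d) (v : Fin d → ℝ) (hv : Antitone v) (h0 : ∀ i, 0 ≤ v i)
    (s : Finset (Fin d)) (hs : s.card = k) :
    ∏ i ∈ s, v i ≤ ∏ j : Fin k, v (Fin.castLE hk j) := by
  have : ∏ i ∈ s, v i = ∏ j : Fin k, v (s.orderEmbOfFin hs j) := by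
    conv_lhs => rw [← Finset.image_orderEmbOfFin_univ s hs]
    rw [Finset.prod_image]
    intro a _ b _ h
    exact (s.orderEmbOfFin hs).injective h
  rw [this]
  refine Finset.prod_le_prod (fun _ _ => h0 _) fun j _ => hv ?_
  rw [Fin.le_def]
  exact alt_val_le _ (s.orderEmbOfFin hs).strictMono j.1 j.2

lemma alt_esymm_bounds {d k : ℕ} (hk : k ≤ d) (v : Fin d → ℝ) (hv : Antitone v)
    (h0 : ∀ i, 0 ≤ v i) :
    ∏ j : Fin k, v (Fin.castLE hk j) ≤ ∑ s ∈ powersetCard k univ, ∏ i ∈ s, v i ∧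
    ∑ s ∈ powersetCard k univ, ∏ i ∈ s, v i ≤
      (d.choose k : ℝ) * ∏ j : Fin k, v (Fin.castLE hk j) := by
  constructor
  · have h := Finset.single_le_sum (f := fun s : Finset (Fin d) => ∏ i ∈ s, v i)
      (s := powersetCard k univ) (fun s _ => Finset.prod_nonneg fun i _ => h0 i)
      (a := univ.map (Fin.castLEEmb hk)) (by simp [Finset.mem_powersetCard])
    simpa using h
  · have h := Finset.sum_le_card_nsmul (powersetCard k (univ : Finset (Fin d)))
      (fun s => ∏ i ∈ s, v i) _
      (fun s hs => alt_prod_le hk v hv h0 s (Finset.mem_powersetCard.mp hs).2)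
    simpa using h

/-- The purely analytic part. -/
lemma alt_limits {d : ℕ} (mu : ℝ → Fin d → ℝ) (hanti : ∀ p > 0, Antitone (mu p))
    (h0 : ∀ p > 0, ∀ i, 0 ≤ mu p i)
    (hlim : ∀ k, ∀ hk : k ≤ d, ∃ L, Tendsto (fun p => ∏ j : Fin k, mu p (Fin.castLE hk j))
      atTop (𝓝 L)) (i : Fin d) :
    ∃ lam, Tendsto (fun p => mu p i) atTop (𝓝 lam) := by
  obtain ⟨i, hi⟩ := i
  obtain ⟨L, hL⟩ := hlim i hi.le
  obtain ⟨L', hL'⟩ := hlim (i + 1) hi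
  by_cases hL0 : L = 0
  · subst hL0
    rcases Nat.eq_zero_or_pos i with rfl | hpos
    · simp at hL
    refine ⟨0, ?_⟩
    have h1 : Tendsto (fun p => mu p ⟨i, hi⟩ ^ i) atTop (𝓝 0) := by
      refine tendsto_of_tendsto_of_tendsto_of_le_of_le' tendsto_const_nhds hL ?_ ?_
      · filter_upwards [eventually_gt_atTop 0] with p hp
        exact pow_nonneg (h0 p hp _) _
      · filter_upwards [eventually_gt_atTop 0] with p hp
        have := Finset.prod_le_prod (s := (univ : Finset (Fin i))) (f := fun _ => mu p ⟨i, hi⟩)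
          (g := fun j => mu p (Fin.castLE hi.le j)) (fun _ _ => h0 p hp _)
          (fun j _ => hanti p hp (by rw [Fin.le_def]; exact j.2.le))
        simpa using this
    have h2 := h1.rpow_const (p := (1 / (i : ℝ))) (Or.inr (by positivity))
    rw [Real.zero_rpow (by positivity)] at h2
    refine h2.congr' ?_
    filter_upwards [eventually_gt_atTop 0] with p hp
    rw [one_div, Real.pow_rpow_inv_natCast (h0 p hp _) hpos.ne']
  · refine ⟨L' / L, (hL'.div hL hL0).congr' ?_⟩
    filter_upwards [hL.eventually_ne hL0] with p hp
    rw [Pi.div_apply, Fin.prod_univ_castSucc]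
    rw [div_eq_iff hp, mul_comm]
    rfl

lemma alt_coeff {d : ℕ} (v : Fin d → ℝ) {k : ℕ} (hk : k ≤ d) :
    (-1 : ℂ) ^ k * (∏ i, (Polynomial.X - Polynomial.C (v i : ℂ))).coeff (d - k) =
      ((∑ s ∈ powersetCard k univ, ∏ i ∈ s, v i : ℝ) : ℂ) := by
  have h := Multiset.prod_X_sub_C_coeff (univ.val.map fun i => (v i : ℂ)) (k := d - k) (by simp)
  rw [Multiset.map_map] at h
  have h2 : (∏ i, (Polynomial.X - Polynomial.C (v i : ℂ))) =
    (univ.val.map ((fun t => Polynomial.X - Polynomial.C t) ∘ fun i => (v i : ℂ))).prod := rfl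
  rw [h2, h, Finset.esymm_map_val]
  have : (univ.val.map fun i => (v i : ℂ)).card - (d - k) = k := by simp; omega
  rw [this, ← mul_assoc, ← mul_pow]
  simp

lemma alt_psdPow_charpoly {d : ℕ} {W : Matrix (Fin d) (Fin d) ℂ} (hW : W.IsHermitian) (r : ℝ) :
    (psdPow W r).charpoly =
      ∏ i, (Polynomial.X - Polynomial.C (((hW.eigenvalues i ^ r : ℝ)) : ℂ)) := by
  rw [psdPow, dif_pos hW, Matrix.charpoly_mul_comm, ← mul_assoc]
  simp [Matrix.charpoly_diagonal]

lemma alt_psdPow_posSemidef {d : ℕ} {W : Matrix (Fin d) (Fin d) ℂ} (hW : W.PosSemidef) (r : ℝ) :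
    (psdPow W r).PosSemidef := by
  rw [psdPow, dif_pos hW.1, Matrix.star_eq_conjTranspose]
  refine Matrix.PosSemidef.mul_mul_conjTranspose_same ?_ _
  rw [Matrix.posSemidef_diagonal_iff]
  intro i
  exact_mod_cast Real.rpow_nonneg (hW.eigenvalues_nonneg i) r

lemma alt_eigsDesc {d : ℕ} {Z : Matrix (Fin d) (Fin d) ℂ} (hZ : Z.PosSemidef) :
    Antitone (eigsDesc Z) ∧ (∀ i, 0 ≤ eigsDesc Z i) ∧
    univ.val.map (eigsDesc Z) = univ.val.map hZ.1.eigenvalues := by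
  rw [eigsDesc, dif_pos hZ.1]
  refine ⟨?_, fun i => hZ.eigenvalues_nonneg _, ?_⟩
  · intro i j hij
    exact Tuple.monotone_sort hZ.1.eigenvalues (Fin.rev_le_rev.mpr hij)
  · have := Multiset.map_univ_val_equiv (Fin.revPerm.trans (Tuple.sort hZ.1.eigenvalues))
    conv_rhs => rw [← this, Multiset.map_map]
    rfl

lemma alt_key {d : ℕ} {W : Matrix (Fin d) (Fin d) ℂ} (hW : W.PosSemidef) {p : ℝ} (hp : 0 < p) :
    ∏ i, (Polynomial.X - Polynomial.C ((eigsDesc (psdPow W (1 / p)) i ^ p : ℝ) : ℂ)) =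
      W.charpoly := by
  have hZ := alt_psdPow_posSemidef hW (1 / p)
  have h1 := (alt_eigsDesc hZ).2.2
  have h2 : univ.val.map hZ.1.eigenvalues = univ.val.map fun i => hW.1.eigenvalues i ^ (1 / p) := by
    have ha := hZ.1.roots_charpoly_eq_eigenvalues
    rw [alt_psdPow_charpoly hW.1, Polynomial.roots_prod _ _
      (by simp [Finset.prod_ne_zero_iff, Polynomial.X_sub_C_ne_zero])] at ha
    have hb := congrArg (Multiset.map Complex.re) ha
    simpa [Multiset.map_map, Function.comp_def] using hb.symm
  rw [h2] at h1
  have h3 := congrArg (fun s : Multiset ℝ =>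
    (s.map fun x => Polynomial.X - Polynomial.C ((x ^ p : ℝ) : ℂ)).prod) h1
  simp only [Multiset.map_map, Function.comp_def] at h3
  rw [hW.1.charpoly_eq]
  refine h3.trans ?_
  refine Finset.prod_congr rfl fun i _ => ?_
  rw [one_div, Real.rpow_inv_rpow (hW.eigenvalues_nonneg i) hp.ne']
  rfl

/-- the formal exponential for `a ^ (t p)`. -/
noncomputable def altMono (a t : ℝ) : AddMonoidAlgebra ℂ ℝ :=
  if a = 0 then 0 else AddMonoidAlgebra.single (t * Real.log a) 1

lemma altEv_mono {a t p : ℝ} (ha : 0 ≤ a) (ht : 0 < t) (hp : 0 < p) :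
    altEv p (altMono a t) = ((a ^ (t * p) : ℝ) : ℂ) := by
  rw [altMono]
  split_ifs with h
  · rw [h, Real.zero_rpow (by positivity)]; simp
  · rw [altEv_single, one_mul, Real.rpow_def_of_pos (lt_of_le_of_ne ha (Ne.symm h))]
    congr 2; ring

lemma alt_psdPow_formal {d : ℕ} {A : Matrix (Fin d) (Fin d) ℂ} (hA : A.PosSemidef) {t : ℝ}
    (ht : 0 < t) : ∃ M : Matrix (Fin d) (Fin d) (AddMonoidAlgebra ℂ ℝ),
      ∀ p > 0, (altEv p).mapMatrix M = psdPow A (t * p) := by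
  let c : ℂ → AddMonoidAlgebra ℂ ℝ := fun z => AddMonoidAlgebra.single 0 z
  have hc : ∀ p z, altEv p (c z) = z := fun p z => by simp [c, altEv_single]
  refine ⟨(hA.1.eigenvectorUnitary : Matrix (Fin d) (Fin d) ℂ).map c *
    Matrix.diagonal (fun i => altMono (hA.1.eigenvalues i) t) *
    (star (hA.1.eigenvectorUnitary : Matrix (Fin d) (Fin d) ℂ)).map c, fun p hp => ?_⟩
  have hcm : ∀ N : Matrix (Fin d) (Fin d) ℂ, (altEv p).mapMatrix (N.map c) = N := by
    intro N; ext i j; simp [hc]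
  rw [map_mul, map_mul, hcm, hcm, psdPow, dif_pos hA.1]
  congr 2
  rw [RingHom.mapMatrix_apply, Matrix.diagonal_map (map_zero _)]
  congr 1
  ext i
  exact altEv_mono (hA.eigenvalues_nonneg i) ht hp

/-- For `n + 1` positive semidefinite matrices, every decreasingly-ordered eigenvalue
`λ_i(p)` of `Z_p = (A_0^{p/2} ⋯ A_{n-1}^{p/2} A_n^p A_{n-1}^{p/2} ⋯ A_0^{p/2})^{1/p}`
converges as `p → ∞`. -/
theorem anti_lie_trotter_multi_eigenvalue_limits_exist
    {d n : ℕ} (A : Fin (n + 1) → Matrix (Fin d) (Fin d) ℂ)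
    (hA : ∀ l, (A l).PosSemidef) :
    ∀ i : Fin d, ∃ lam : ℝ,
      Tendsto (fun p : ℝ => eigsDesc (ZmatM A p) i) atTop (𝓝 lam) := by
  let W : ℝ → Matrix (Fin d) (Fin d) ℂ := fun p =>
    (List.ofFn fun l : Fin n => psdPow (A l.castSucc) (p / 2)).prod *
    psdPow (A (Fin.last n)) p *
    ((List.ofFn fun l : Fin n => psdPow (A l.castSucc) (p / 2)).reverse).prod
  have hZW : ∀ p, ZmatM A p = psdPow (W p) (1 / p) := fun p => rfl
  have hW : ∀ p, (W p).PosSemidef := by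
    intro p
    have h := (alt_psdPow_posSemidef (hA (Fin.last n)) p).mul_mul_conjTranspose_same
      (List.ofFn fun l : Fin n => psdPow (A l.castSucc) (p / 2)).prod
    rw [Matrix.conjTranspose_list_prod, List.map_ofFn] at h
    have he : (Matrix.conjTranspose ∘ fun l : Fin n => psdPow (A l.castSucc) (p / 2)) =
        fun l : Fin n => psdPow (A l.castSucc) (p / 2) := by
      ext1 l
      exact (alt_psdPow_posSemidef (hA l.castSucc) (p / 2)).1
    rw [he] at h
    exact h
  have hF : ∃ M : Matrix (Fin d) (Fin d) (AddMonoidAlgebra ℂ ℝ),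
      ∀ p > 0, (altEv p).mapMatrix M = W p := by
    choose M hM using fun l => alt_psdPow_formal (hA l) (t := 1 / 2) (by norm_num)
    obtain ⟨N, hN⟩ := alt_psdPow_formal (hA (Fin.last n)) (t := 1) (by norm_num)
    refine ⟨(List.ofFn fun l : Fin n => M l.castSucc).prod * N *
      ((List.ofFn fun l : Fin n => M l.castSucc).reverse).prod, fun p hp => ?_⟩
    have he : ((altEv p).mapMatrix ∘ fun l : Fin n => M l.castSucc) =
        fun l : Fin n => psdPow (A l.castSucc) (p / 2) := by
      ext1 l
      rw [Function.comp_apply, hM _ p hp]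
      congr 1; ring
    rw [map_mul, map_mul, hN p hp, map_list_prod, map_list_prod, List.map_reverse, List.map_ofFn,
      he, one_mul]
  obtain ⟨M, hM⟩ := hF
  have hZ : ∀ p, (ZmatM A p).PosSemidef := fun p => alt_psdPow_posSemidef (hW p) _
  have hm : ∀ p, Antitone (eigsDesc (ZmatM A p)) := fun p => (alt_eigsDesc (hZ p)).1
  have hn : ∀ p i, 0 ≤ eigsDesc (ZmatM A p) i := fun p => (alt_eigsDesc (hZ p)).2.1
  refine alt_limits (fun p => eigsDesc (ZmatM A p)) (fun p _ => hm p) (fun p _ => hn p) ?_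
  intro k hk
  let v : ℝ → Fin d → ℝ := fun p i => eigsDesc (ZmatM A p) i ^ p
  have hv0 : ∀ p i, 0 ≤ v p i := fun p i => Real.rpow_nonneg (hn p i) p
  have hva : ∀ p > 0, Antitone (v p) := fun p hp i j hij =>
    Real.rpow_le_rpow (hn p j) (hm p hij) hp.le
  let e : ℝ → ℝ := fun p => ∑ s ∈ powersetCard k univ, ∏ i ∈ s, v p i
  have he0 : ∀ p, 0 ≤ e p := fun p =>
    Finset.sum_nonneg fun s _ => Finset.prod_nonneg fun i _ => hv0 p i
  obtain ⟨L, hL⟩ := alt_expsum_root ((-1) ^ k * M.charpoly.coeff (d - k)) e (fun p _ => he0 p)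
    (fun p hp => by
      rw [map_mul, map_pow, map_neg, map_one, ← Polynomial.coeff_map, ← Matrix.charpoly_map,
        ← RingHom.mapMatrix_apply, hM p hp, ← alt_key (hW p) hp, ← alt_coeff (v p) hk]
      rfl)
  have hC : (0 : ℝ) < d.choose k := by exact_mod_cast Nat.choose_pos hk
  have hprod : ∀ p > 0, ∏ j : Fin k, eigsDesc (ZmatM A p) (Fin.castLE hk j) =
      (∏ j : Fin k, v p (Fin.castLE hk j)) ^ (1 / p) := by
    intro p hp
    rw [← Real.finsetProd_rpow _ _ (fun j _ => hv0 p _)]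
    refine Finset.prod_congr rfl fun j _ => ?_
    rw [one_div, Real.rpow_rpow_inv (hn p _) hp.ne']
  refine ⟨L, ?_⟩
  have h3 : Tendsto (fun p : ℝ => 1 / p) atTop (𝓝 0) := by
    simpa using tendsto_inv_atTop_zero (𝕜 := ℝ)
  have hCl : Tendsto (fun p : ℝ => ((d.choose k : ℝ)⁻¹) ^ (1 / p)) atTop (𝓝 1) := by
    have := (tendsto_const_nhds (x := ((d.choose k : ℝ)⁻¹)) (f := atTop)).rpow h3
      (Or.inl (by positivity))
    simpa using this
  have hlow : Tendsto (fun p : ℝ => ((d.choose k : ℝ)⁻¹) ^ (1 / p) * e p ^ (1 / p)) atTop (𝓝 L) := by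
    simpa using hCl.mul hL
  refine tendsto_of_tendsto_of_tendsto_of_le_of_le' hlow hL ?_ ?_
  · filter_upwards [eventually_gt_atTop 0] with p hp
    rw [hprod p hp, ← Real.mul_rpow (by positivity) (he0 p)]
    refine Real.rpow_le_rpow (mul_nonneg (by positivity) (he0 p)) ?_ (by positivity)
    rw [inv_mul_le_iff₀ hC]
    exact (alt_esymm_bounds hk (v p) (hva p hp) (hv0 p)).2
  · filter_upwards [eventually_gt_atTop 0] with p hp
    rw [hprod p hp]
    exact Real.rpow_le_rpow (Finset.prod_nonneg fun j _ => hv0 p _)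
      (alt_esymm_bounds hk (v p) (hva p hp) (hv0 p)).1 (by positivity)
end
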